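/- Let k be an algebraically closed field of characteristic 0 and let A be a finitely generated commutative k-algebra which is an integral domain and is not a field (the coordinate ring of an irreducible affine variety X of positive dimension). Then the Lie algebra Der_k(A) of k-linear derivations of A (the polynomial vector fields on X) is a simple Lie algebra over k if and only if A is a smooth k-algebra (i.e., X is a smooth variety). -/

import Mathlib

/-- `A` is differentially simple: the only derivation-stable ideals are trivial. -/
def DSimp (k A : Type*) [CommRing k] [CommRing A] [Algebra k A] : Prop :=
  ∀ I : Ideal A, (∀ D : Derivation k A A, ∀ a ∈ I, D a ∈ I) → I = ⊥ ∨ I = ⊤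

section one
variable {k A : Type*} [Field k] [CharZero k] [CommRing A] [IsDomain A] [Algebra k A]

theorem exists_smul_mem (J : LieIdeal k (Derivation k A A)) (hJ : J ≠ ⊥) :
    ∃ a : A, a ≠ 0 ∧ ∀ D : Derivation k A A, a • D ∈ J := by
  have : CharZero A := charZero_of_injective_algebraMap (algebraMap k A).injective
  obtain ⟨η, hη, hη0⟩ := (Submodule.ne_bot_iff J.toSubmodule).1 (by simpa using hJ)
  have hl : ∀ x y : Derivation k A A, x ∈ J → ⁅x, y⁆ ∈ J := fun x y hx => lie_mem_left k _ J x y hx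
  have hr : ∀ x y : Derivation k A A, y ∈ J → ⁅x, y⁆ ∈ J := fun x y hy => lie_mem_right k _ J x y hy
  -- η f • η ∈ J
  have h1 : ∀ f, η f • η ∈ J := by
    intro f
    have := hl η (f • η) hη
    convert this using 1
    ext x
    (try simp [Derivation.commutator_apply, Derivation.leibniz]) <;> (try ring)
  have h2 : ∀ f g, (g * η (η f)) • η ∈ J := by
    intro f g
    have e1 := hl (η f • η) (g • η) (h1 f)
    have e2 := h1 (g * η f)
    have e3 : (2⁻¹ : k) • (η (g * η f) • η - ⁅η f • η, g • η⁆) ∈ J :=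
      J.smul_mem (2⁻¹ : k) (J.sub_mem e2 e1)
    convert e3 using 2
    ext x
    have c : (2 : A) * algebraMap k A 2⁻¹ = 1 := by
      rw [← map_ofNat (algebraMap k A) 2, ← map_mul]
      simp
    simp [Derivation.commutator_apply, Derivation.leibniz, Algebra.smul_def]
    linear_combination (-(g * η (η f) * η x)) * c
  obtain ⟨f, hf⟩ : ∃ f, η (η f) ≠ 0 := by
    by_contra! h
    apply hη0
    ext f
    have := h (f * f)
    simp [Derivation.leibniz, h f] at this
    simpa using this
  set μ := η (η f) • η with hμ
  have hμJ : ∀ g : A, g • μ ∈ J := by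
    intro g; rw [hμ, smul_smul]; exact h2 f g
  have hμ0 : μ ≠ 0 := by
    intro h0
    apply hη0
    ext x
    have := congrArg (fun d => d x) h0
    simp [hμ, hf] at this
    simpa using this
  obtain ⟨g, hg⟩ : ∃ g, μ g ≠ 0 := by
    by_contra! h
    exact hμ0 (by ext x; simp [h x])
  refine ⟨μ g, hg, fun D => ?_⟩
  have e1 := hl (μ) (g • D) (by simpa using hμJ 1)
  have e3 : g • ⁅D, μ⁆ ∈ J := by
    have : ⁅D, g • μ⁆ - D g • μ ∈ J := J.sub_mem (hr D (g • μ) (hμJ g)) (hμJ (D g))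
    convert this using 2
    ext x
    (try simp [Derivation.commutator_apply, Derivation.leibniz]) <;> (try ring)
  have e4 : ⁅μ, g • D⁆ + g • ⁅D, μ⁆ ∈ J := J.add_mem e1 e3
  convert e4 using 2
  ext x
  (try simp [Derivation.commutator_apply, Derivation.leibniz]) <;> (try ring)

theorem isSimple_of_dsimp (h : DSimp k A) (hA : ¬ IsField A) :
    LieAlgebra.IsSimple k (Derivation k A A) := by
  refine ⟨fun J => ?_, fun hab => ?_⟩
  · by_cases hJ : J = ⊥
    · exact .inl hJ
    right
    obtain ⟨a, ha, haJ⟩ := exists_smul_mem J hJ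
    let I : Ideal A :=
      { carrier := {a | ∀ D : Derivation k A A, a • D ∈ J}
        add_mem' := fun {x y} hx hy D => by rw [add_smul]; exact J.add_mem (hx D) (hy D)
        zero_mem' := fun D => by rw [zero_smul]; exact J.zero_mem
        smul_mem' := fun c x hx D => by
          rw [smul_eq_mul, mul_comm, mul_smul]; exact hx _ }
    have hI := h I (by
      intro D a ha E
      have e1 : ⁅D, a • E⁆ ∈ J := lie_mem_right k _ J _ _ (ha E)
      have e2 : ⁅D, a • E⁆ - a • ⁅D, E⁆ ∈ J := J.sub_mem e1 (ha ⁅D, E⁆)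
      convert e2 using 2
      ext x
      (try simp [Derivation.commutator_apply, Derivation.leibniz]) <;> (try ring))
    rcases hI with hI | hI
    · exact absurd ((Submodule.eq_bot_iff I).1 hI a haJ) ha
    · rw [eq_top_iff]
      intro D _
      have : (1 : A) ∈ I := hI ▸ Submodule.mem_top
      simpa using this D
  · -- all derivations vanish
    have hz : ∀ D : Derivation k A A, D = 0 := by
      intro D
      ext x
      have h1 : ⁅D, x • D⁆ = 0 := hab.trivial _ _
      have := congrArg (fun d => d x) h1
      simp [Derivation.commutator_apply, Derivation.leibniz] at this
      simpa using this
    obtain ⟨I, hI0, hI1⟩ := Ring.not_isField_iff_exists_ideal_bot_lt_and_lt_top.1 hA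
    rcases h I (by intro D a ha; simp [hz D]) with h | h
    · exact hI0.ne' h
    · exact hI1.ne h

theorem dsimp_of_isSimple [IsNoetherianRing A]
    (h : LieAlgebra.IsSimple k (Derivation k A A)) : DSimp k A := by
  intro I hI
  by_contra! hc
  obtain ⟨h0, h1⟩ := hc
  have hpow : ∀ n : ℕ, ∀ D : Derivation k A A, ∀ a ∈ I ^ n, D a ∈ I ^ n := by
    intro n
    induction n with
    | zero => simp
    | succ n ih =>
      intro D a ha
      rw [pow_succ] at ha ⊢
      refine Submodule.mul_induction_on ha ?_ ?_
      · intro x hx y hy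
        rw [Derivation.leibniz]
        refine add_mem (Ideal.mul_mem_mul hx (hI D y hy)) ?_
        rw [smul_eq_mul, mul_comm y]
        exact Ideal.mul_mem_mul (ih D x hx) hy
      · intro x y hx hy
        rw [map_add]; exact add_mem hx hy
  have hex : ∃ D : Derivation k A A, D ≠ 0 := by
    by_contra! hz
    apply h.non_abelian
    exact ⟨fun x m => by rw [hz x, hz m]; simp⟩
  obtain ⟨D, hD⟩ := hex
  have key : ∀ n : ℕ, ∀ x, D x ∈ I ^ n := by
    intro n
    let J : LieIdeal k (Derivation k A A) :=
      { carrier := {E | ∀ x, E x ∈ I ^ n}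
        add_mem' := fun {x y} hx hy z => add_mem (hx z) (hy z)
        zero_mem' := fun z => by simp
        smul_mem' := fun c x hx z => by
          rw [Derivation.smul_apply, Algebra.smul_def]
          exact Ideal.mul_mem_left _ _ (hx z)
        lie_mem := fun {E F} hF z => by
          rw [Derivation.commutator_apply]
          exact sub_mem (hpow n E _ (hF z)) (hF _) }
    rcases h.eq_bot_or_eq_top J with hJ | hJ
    · exfalso
      obtain ⟨a, ha, ha0⟩ := (Submodule.ne_bot_iff _).1 (pow_ne_zero n h0)
      have : a • D ∈ J := fun z => by
        rw [Derivation.smul_apply, smul_eq_mul]; exact Ideal.mul_mem_right _ _ ha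
      rw [hJ, LieSubmodule.mem_bot] at this
      apply hD
      ext x
      have := congrArg (fun d => d x) this
      simpa [ha0] using this
    · have : D ∈ J := by rw [hJ]; exact LieSubmodule.mem_top _
      exact this
  apply hD
  ext x
  have := (Submodule.mem_iInf (p := fun i : ℕ => I ^ i)).2 (fun n => key n x)
  rw [Ideal.iInf_pow_eq_bot_of_isDomain I h1] at this
  simpa using this
end one


section three
open MvPolynomial

theorem generic_aux {k P : Type*} [CommRing k] [CommRing P] [Algebra k P] (I : Ideal P)
    (G : Finset P) (hG : Ideal.span (G : Set P) = I) (a : P) (δ : Derivation k P P)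
    (hδI : ∀ p, δ p ∈ I) (h : ∀ y ∈ G, a * y - δ y ∈ I ^ 2) (f : P) (hf : f ∈ I) :
    a * f - δ f ∈ I ^ 2 := by
  have hGI : ∀ y ∈ G, y ∈ I := fun y hy => hG ▸ Ideal.subset_span hy
  have hf' : f ∈ Submodule.span P (G : Set P) := by
    rw [← hG] at hf; exact hf
  have key : f ∈ I ∧ a * f - δ f ∈ I ^ 2 := by
    induction hf' using Submodule.span_induction with
    | mem y hy => exact ⟨hGI y hy, h y hy⟩
    | zero => simp
    | add x y hx hy ihx ihy =>
      obtain ⟨hx, hx'⟩ := ihx (by rw [← hG]; exact hx)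
      obtain ⟨hy, hy'⟩ := ihy (by rw [← hG]; exact hy)
      refine ⟨add_mem hx hy, ?_⟩
      convert add_mem hx' hy' using 1
      rw [map_add]; ring
    | smul c x hx ih =>
      obtain ⟨hx, hx'⟩ := ih (by rw [← hG]; exact hx)
      refine ⟨Ideal.mul_mem_left _ _ hx, ?_⟩
      have h1 := Ideal.mul_mem_left _ c hx'
      have h2 : x * δ c ∈ I ^ 2 := by
        rw [pow_two]; exact Ideal.mul_mem_mul hx (hδI c)
      convert sub_mem h1 h2 using 1
      rw [smul_eq_mul, Derivation.leibniz, smul_eq_mul, smul_eq_mul]; ring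
  exact key.2

set_option maxHeartbeats 1000000 in
theorem exists_generic {k : Type*} [Field k] [CharZero k] {σ : Type} [Finite σ]
    (I : Ideal (MvPolynomial σ k)) [I.IsPrime] :
    ∃ a : MvPolynomial σ k, a ∉ I ∧ ∃ δ : Derivation k (MvPolynomial σ k) (MvPolynomial σ k),
      (∀ p, δ p ∈ I) ∧ ∀ f ∈ I, a * f - δ f ∈ I ^ 2 := by
  classical
  let P := MvPolynomial σ k
  let B := Localization.AtPrime I
  have : Algebra.EssFiniteType k I.ResidueField :=
    Algebra.EssFiniteType.comp k P I.ResidueField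
  have hsm : Algebra.FormallySmooth k I.ResidueField := inferInstance
  let φ : B →ₐ[k] I.ResidueField := IsScalarTower.toAlgHom k B I.ResidueField
  have hφ : Function.Surjective φ := IsLocalRing.residue_surjective
  let M := RingHom.ker φ.toRingHom
  obtain ⟨g, hg⟩ : ∃ g : I.ResidueField →ₐ[k] B ⧸ M ^ 2, ∀ x, φ.kerSquareLift (g x) = x := by
    obtain ⟨g, hg⟩ := (Algebra.FormallySmooth.iff_split_surjection φ hφ).1 hsm
    exact ⟨g, fun x => DFunLike.congr_fun hg x⟩
  have hker : M = I.map (algebraMap P B) := by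
    rw [IsLocalization.AtPrime.map_eq_maximalIdeal I B]
    exact IsLocalRing.ker_residue
  let π : P → B ⧸ M ^ 2 := fun p => Ideal.Quotient.mk _ (algebraMap P B p)
  let s : P → B ⧸ M ^ 2 := fun p => g (φ (algebraMap P B p))
  have hdiff : ∀ p, ∃ b ∈ M, π p - s p = Ideal.Quotient.mk _ b := by
    intro p
    obtain ⟨b, hb⟩ := Ideal.Quotient.mk_surjective (π p - s p)
    refine ⟨b, ?_, hb.symm⟩
    have h1 : φ.kerSquareLift (Ideal.Quotient.mk _ b) = φ b := rfl
    have h2 : φ.kerSquareLift (π p) = φ (algebraMap P B p) := rfl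
    have h3 : φ.kerSquareLift (s p) = φ (algebraMap P B p) := hg _
    change φ b = 0
    rw [← h1, hb, map_sub, h2, h3, sub_self]
  have hprod : ∀ p q, (π p - s p) * (π q - s q) = 0 := by
    intro p q
    obtain ⟨b, hb, hb'⟩ := hdiff p
    obtain ⟨c, hc, hc'⟩ := hdiff q
    rw [hb', hc', ← map_mul, Ideal.Quotient.eq_zero_iff_mem, pow_two]
    exact Ideal.mul_mem_mul hb hc
  choose b hbM hb using fun i : σ => hdiff (X i)
  have hb2 : ∀ i, ∃ x : I × I.primeCompl, b i * algebraMap P B x.2 = algebraMap P B x.1 := by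
    intro i
    have := hbM i
    rw [hker] at this
    exact (IsLocalization.mem_map_algebraMap_iff I.primeCompl B).1 this
  choose x hx using hb2
  cases nonempty_fintype σ
  let S : P := ∏ i, (x i).2
  have hS : S ∉ I := by
    have : S ∈ I.primeCompl := Submonoid.prod_mem _ (fun i _ => (x i).2.2)
    exact this
  let r : σ → P := fun i => (∏ j ∈ Finset.univ.erase i, ((x j).2 : P)) * (x i).1
  have hr : ∀ i, algebraMap P B S * b i = algebraMap P B (r i) := by
    intro i
    have : S = (∏ j ∈ Finset.univ.erase i, ((x j).2 : P)) * (x i).2 :=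
      (Finset.prod_erase_mul _ _ (Finset.mem_univ i)).symm
    rw [this, map_mul, mul_assoc, mul_comm _ (b i), hx, ← map_mul]
  let δ : Derivation k P P := mkDerivation k r
  have hδI : ∀ p, δ p ∈ I := by
    intro p
    induction p using MvPolynomial.induction_on with
    | C a => rw [show δ (C a) = 0 from derivation_C _ a]; exact I.zero_mem
    | add p q hp hq => rw [map_add]; exact add_mem hp hq
    | mul_X p i hp =>
      rw [Derivation.leibniz]
      refine add_mem (Ideal.mul_mem_left _ _ ?_) (Ideal.mul_mem_left _ _ hp)
      rw [show δ (X i) = r i from mkDerivation_X _ _ i]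
      exact Ideal.mul_mem_left _ _ (x i).1.2
  have hπmul : ∀ p q, π (p * q) = π p * π q := fun p q => by simp [π]
  have hsmul : ∀ p q, s (p * q) = s p * s q := fun p q => by simp [s]
  have hδ : ∀ p, π S * (π p - s p) = π (δ p) := by
    intro p
    induction p using MvPolynomial.induction_on with
    | C a =>
      have h1 : π (C a) = algebraMap k _ a := rfl
      have h2 : s (C a) = algebraMap k _ a := by
        have : algebraMap P B (C a) = algebraMap k B a := rfl
        simp only [s, this, AlgHom.commutes]
      rw [h1, h2, show δ (C a) = 0 from derivation_C _ a]
      simp [π]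
    | add p q hp hq =>
      have h1 : π (p + q) = π p + π q := by simp [π]
      have h2 : s (p + q) = s p + s q := by simp [s]
      have h3 : π (δ p + δ q) = π (δ p) + π (δ q) := by simp [π]
      rw [map_add, h3, ← hp, ← hq, h1, h2]; ring
    | mul_X p i hp =>
      have h4 : π S * (π (X i) - s (X i)) = π (r i) := by
        rw [hb i, ← map_mul, hr]
      have h3 : π (p * r i + X i * δ p) = π p * π (r i) + π (X i) * π (δ p) := by simp [π]
      rw [Derivation.leibniz, show δ (X i) = r i from mkDerivation_X _ _ i, smul_eq_mul,
        smul_eq_mul, h3, ← h4, ← hp, hπmul, hsmul]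
      linear_combination -π S * hprod p (X i)
  have hloc : ∀ f : I, ∃ t ∈ I.primeCompl, t * (S * f - δ f) ∈ I ^ 2 := by
    intro f
    rw [← IsLocalization.algebraMap_mem_map_algebraMap_iff I.primeCompl B, Ideal.map_pow, ← hker,
      ← Ideal.Quotient.eq_zero_iff_mem]
    have h1 : s f = 0 := by
      have : φ (algebraMap P B f) = 0 := by
        have : algebraMap P B f ∈ M := by rw [hker]; exact Ideal.mem_map_of_mem _ f.2
        exact this
      simp [s, this]
    have := hδ f
    rw [h1, sub_zero, ← hπmul] at this
    rw [map_sub, map_sub]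
    exact sub_eq_zero.2 this
  choose t ht ht' using hloc
  obtain ⟨G, hG⟩ : I.FG := (isNoetherianRing_iff_ideal_fg _).1 inferInstance I
  have hGI : ∀ y ∈ G, y ∈ I := fun y hy => hG ▸ Ideal.subset_span hy
  let T : P := ∏ y ∈ G.attach, t ⟨y, hGI y y.2⟩
  have hT : T ∉ I := by
    have : T ∈ I.primeCompl := Submonoid.prod_mem _ (fun i _ => ht _)
    exact this
  have hTd : ∀ y (hy : y ∈ G), t ⟨y, hGI y hy⟩ ∣ T := fun y hy =>
    Finset.dvd_prod_of_mem (fun y : G => t ⟨y, hGI y y.2⟩) (Finset.mem_attach G ⟨y, hy⟩)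
  clear_value T S δ
  refine ⟨T * S, Ideal.IsPrime.mul_notMem ‹_› hT hS, T • δ, fun p => ?_, fun f hf => ?_⟩
  · exact Ideal.mul_mem_left _ _ (hδI p)
  · refine generic_aux I G hG (T * S) (T • δ) (fun p => Ideal.mul_mem_left _ _ (hδI p)) ?_ f hf
    intro y hy
    obtain ⟨c, hc⟩ := hTd y hy
    have := Ideal.mul_mem_left _ c (ht' ⟨y, hGI y hy⟩)
    convert this using 1
    rw [Derivation.smul_apply, hc, smul_eq_mul]
    ring

theorem smooth_of_dsimp {k A : Type*} [Field k] [CharZero k] [CommRing A] [IsDomain A]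
    [Algebra k A] [Algebra.FiniteType k A] (h : DSimp k A) : Algebra.FormallySmooth k A := by
  obtain ⟨n, φ, hφ⟩ := Algebra.FiniteType.iff_quotient_mvPolynomial''.1
    (inferInstance : Algebra.FiniteType k A)
  let P := MvPolynomial (Fin n) k
  set I : Ideal P := RingHom.ker φ.toRingHom with hIdef
  have hI : I.IsPrime := RingHom.ker_isPrime _
  have hmem : ∀ p, p ∈ I ↔ φ p = 0 := fun p => Iff.rfl
  let J : Ideal P :=
    { carrier := {a | ∃ δ : Derivation k P P, (∀ p, δ p ∈ I) ∧ ∀ f ∈ I, a * f - δ f ∈ I ^ 2}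
      add_mem' := by
        rintro a b ⟨δ, h1, h2⟩ ⟨ε, h3, h4⟩
        refine ⟨δ + ε, fun p => add_mem (h1 p) (h3 p), fun f hf => ?_⟩
        convert add_mem (h2 f hf) (h4 f hf) using 1
        rw [Derivation.add_apply]; ring
      zero_mem' := ⟨0, by simp, by simp⟩
      smul_mem' := by
        rintro c a ⟨δ, h1, h2⟩
        refine ⟨c • δ, fun p => Ideal.mul_mem_left _ _ (h1 p), fun f hf => ?_⟩
        convert Ideal.mul_mem_left _ c (h2 f hf) using 1
        rw [Derivation.smul_apply, smul_eq_mul, smul_eq_mul]; ring }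
  have hIJ : I ≤ J := by
    intro a ha
    refine ⟨0, by simp, fun f hf => ?_⟩
    simpa [pow_two] using Ideal.mul_mem_mul ha hf
  have hstab : ∀ D : Derivation k A A, ∀ a ∈ J.map φ, D a ∈ J.map φ := by
    intro D a ha
    obtain ⟨p, ⟨δ, h1, h2⟩, rfl⟩ := (Ideal.mem_map_iff_of_surjective φ hφ).1 ha
    choose c hc using fun i : Fin n => hφ (D (φ (X i)))
    let E : Derivation k P P := mkDerivation k c
    have hE : ∀ p, φ (E p) = D (φ p) := by
      intro p
      induction p using MvPolynomial.induction_on with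
      | C a =>
        rw [show E (C a) = 0 from derivation_C _ a]
        have : φ (C a) = algebraMap k A a := φ.commutes a
        rw [this, map_zero, Derivation.map_algebraMap]
      | add p q hp hq => simp [hp, hq]
      | mul_X p i hp =>
        rw [Derivation.leibniz, show E (X i) = c i from mkDerivation_X _ _ i, map_mul,
          Derivation.leibniz, map_add, smul_eq_mul, smul_eq_mul, smul_eq_mul, smul_eq_mul,
          map_mul, map_mul, hc, hp]
    have hEI : ∀ p ∈ I, E p ∈ I := by
      intro p hp
      rw [hmem] at hp ⊢
      rw [hE, hp, map_zero]
    have hEI2 : ∀ p ∈ I ^ 2, E p ∈ I ^ 2 := by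
      intro p hp
      rw [pow_two] at hp ⊢
      refine Submodule.mul_induction_on hp ?_ ?_
      · intro x hx y hy
        rw [Derivation.leibniz]
        refine add_mem (Ideal.mul_mem_mul hx (hEI y hy)) ?_
        exact Ideal.mul_mem_mul hy (hEI x hx)
      · intro x y hx hy
        rw [map_add]; exact add_mem hx hy
    rw [← hE]
    refine Ideal.mem_map_of_mem _ ⟨⁅E, δ⁆, fun q => ?_, fun f hf => ?_⟩
    · rw [Derivation.commutator_apply]
      exact sub_mem (hEI _ (h1 q)) (h1 _)
    · have e1 := hEI2 _ (h2 f hf)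
      have e2 := h2 _ (hEI f hf)
      convert sub_mem e1 e2 using 1
      rw [Derivation.commutator_apply, map_sub, Derivation.leibniz, smul_eq_mul, smul_eq_mul]
      ring
  have hJtop : J = ⊤ := by
    rcases h _ hstab with h0 | h0
    · exfalso
      obtain ⟨a, ha, δ, hδ⟩ := exists_generic I
      apply ha
      rw [hmem]
      have : φ a ∈ J.map φ := Ideal.mem_map_of_mem _ ⟨δ, hδ⟩
      rw [h0] at this
      simpa using this
    · rw [Ideal.eq_top_iff_one] at h0 ⊢
      obtain ⟨p, hp, hp1⟩ := (Ideal.mem_map_iff_of_surjective φ hφ).1 h0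
      have : 1 - p ∈ J := hIJ (by rw [hmem]; simp [hp1])
      simpa using add_mem this hp
  have h1J : (1 : P) ∈ J := hJtop ▸ Submodule.mem_top
  obtain ⟨δ, hδI, hδ⟩ := h1J
  let ψ : P →ₐ[k] P ⧸ I ^ 2 :=
    AlgHom.ofLinearMap ((Ideal.Quotient.mkₐ k (I ^ 2)).toLinearMap ∘ₗ
      (LinearMap.id - δ.toLinearMap)) (by simp) (by
        intro x y
        change Ideal.Quotient.mk _ (x * y - δ (x * y)) =
          Ideal.Quotient.mk _ (x - δ x) * Ideal.Quotient.mk _ (y - δ y)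
        rw [← map_mul, Ideal.Quotient.eq, ← neg_mem_iff]
        have : δ x * δ y ∈ I ^ 2 := by rw [pow_two]; exact Ideal.mul_mem_mul (hδI x) (hδI y)
        convert this using 1
        rw [Derivation.leibniz, smul_eq_mul, smul_eq_mul]; ring)
  have hψ : ∀ p, ψ p = Ideal.Quotient.mk _ (p - δ p) := fun p => rfl
  let e := Ideal.quotientKerAlgEquivOfSurjective hφ
  have hlift : ∀ a ∈ RingHom.ker φ, ψ a = 0 := by
    intro a ha
    have := hδ a ha
    rw [one_mul] at this
    rw [hψ]
    exact Ideal.Quotient.eq_zero_iff_mem.2 this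
  let g : A →ₐ[k] P ⧸ I ^ 2 :=
    (Ideal.Quotient.liftₐ (RingHom.ker φ) ψ hlift).comp e.symm.toAlgHom
  have hg : ∀ p, g (φ p) = ψ p := by
    intro p
    have : e.symm (φ p) = Ideal.Quotient.mk _ p := by
      rw [AlgEquiv.symm_apply_eq]; rfl
    change Ideal.Quotient.liftₐ (RingHom.ker φ) ψ hlift (e.symm (φ p)) = _
    rw [this]; rfl
  refine Algebra.FormallySmooth.of_split φ g ?_
  ext a
  obtain ⟨p, rfl⟩ := hφ a
  rw [AlgHom.comp_apply, hg, hψ]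
  change φ (p - δ p) = φ p
  rw [map_sub, (hmem _).1 (hδI p), sub_zero]
end three


section four
open MvPolynomial

theorem ideal_eq_top_of_pderiv {k : Type*} [Field k] [CharZero k] {σ : Type}
    (J : Ideal (MvPolynomial σ k)) (h0 : J ≠ ⊥) (h : ∀ i, ∀ p ∈ J, pderiv i p ∈ J) : J = ⊤ := by
  obtain ⟨p, hp, hp0⟩ := (Submodule.ne_bot_iff _).1 h0
  suffices ∀ n : ℕ, ∀ p ∈ J, p ≠ 0 → p.totalDegree ≤ n → J = ⊤ from
    this _ p hp hp0 le_rfl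
  intro n
  induction n with
  | zero =>
    intro p hp hp0 hn
    rw [Nat.le_zero, totalDegree_eq_zero_iff_eq_C] at hn
    have hc : coeff 0 p ≠ 0 := fun hc => hp0 (by rw [hn, hc, C_0])
    refine J.eq_top_of_isUnit_mem hp ?_
    rw [hn]
    exact (isUnit_iff_ne_zero.2 hc).map C
  | succ n ih =>
    intro p hp hp0 hn
    by_cases hz : p.totalDegree = 0
    · exact ih p hp hp0 (by omega)
    have : ∃ m ∈ p.support, ∃ i, m i ≠ 0 := by
      by_contra! hc
      apply hz
      rw [totalDegree_eq_zero_iff]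
      exact fun m hm i => hc m hm i
    obtain ⟨m, hm, i, hi⟩ := this
    refine ih (pderiv i p) (h i p hp) ?_ ?_
    · intro hzero
      have h1 := coeff_pderiv (i := i) p (m - Finsupp.single i 1)
      have h2 : m - Finsupp.single i 1 + Finsupp.single i 1 = m :=
        tsub_add_cancel_of_le (by simpa [Nat.one_le_iff_ne_zero] using hi)
      rw [hzero, coeff_zero, h2] at h1
      have h3 := mem_support_iff.1 hm
      rcases mul_eq_zero.1 h1.symm with h4 | h4
      · exact h3 h4
      · exact Nat.cast_add_one_ne_zero _ h4
    · refine Finset.sup_le fun s hs => ?_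
      have h1 := mem_support_iff.1 hs
      rw [coeff_pderiv] at h1
      have h2 := le_totalDegree (mem_support_iff.2 (left_ne_zero_of_mul h1))
      rw [Finsupp.sum_add_index' (fun _ => rfl) (fun _ _ _ => rfl),
        Finsupp.sum_single_index rfl] at h2
      omega

/-- derivations extend along formally étale maps -/
theorem exists_derivation_extend (k P T : Type*) [CommRing k] [CommRing P] [CommRing T]
    [Algebra k P] [Algebra k T] [Algebra P T] [IsScalarTower k P T] [Algebra.FormallyEtale P T]
    (d : Derivation k P P) :
    ∃ D : Derivation k T T, ∀ p, D (algebraMap P T p) = algebraMap P T (d p) := by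
  let l : Ω[P⁄k] →ₗ[P] T := (Algebra.linearMap P T) ∘ₗ d.liftKaehlerDifferential
  let L : Ω[T⁄k] →ₗ[T] T := (l.liftBaseChange T) ∘ₗ
    (KaehlerDifferential.tensorKaehlerEquivOfFormallyEtale k P T).symm.toLinearMap
  refine ⟨L.compDer (KaehlerDifferential.D k T), fun p => ?_⟩
  change l.liftBaseChange T ((KaehlerDifferential.tensorKaehlerEquivOfFormallyEtale k P T).symm
    (KaehlerDifferential.D k T (algebraMap P T p))) = _
  rw [KaehlerDifferential.tensorKaehlerEquivOfFormallyEtale_symm_D_algebraMap]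
  simp [l]

theorem isAlgebraic_of_etale (P T : Type*) [CommRing P] [IsDomain P] [CommRing T] [IsDomain T]
    [IsNoetherianRing P]
    [Algebra P T] [Algebra.Etale P T] : Algebra.IsAlgebraic P T := by
  have : Module.Flat P T := inferInstance
  have : FaithfulSMul P T := inferInstance
  let F := FractionRing P
  let L := FractionRing T
  have : FaithfulSMul P L := FaithfulSMul.trans P T L
  let : Algebra F L := FractionRing.liftAlgebra P L
  have : IsScalarTower P F L := inferInstance
  have : Algebra.FormallyEtale T L := .of_isLocalization (nonZeroDivisors T)
  have : Algebra.FormallyUnramified P L := .comp P T L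
  have : Algebra.FormallyUnramified F L := .of_restrictScalars P F L
  have : Algebra.EssFiniteType T L := .of_isLocalization L (nonZeroDivisors T)
  have : Algebra.EssFiniteType P L := .comp P T L
  have : Algebra.EssFiniteType F L := .of_comp P F L
  have : Algebra.IsSeparable F L := Algebra.FormallyUnramified.isSeparable F L
  have h1 : Algebra.IsAlgebraic F L := inferInstance
  have h2 : Algebra.IsAlgebraic P L :=
    (IsFractionRing.comap_isAlgebraic_iff (A := P) (K := F) (C := L)).2 h1
  exact Algebra.IsAlgebraic.tower_bot_of_injective (FaithfulSMul.algebraMap_injective T L)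

/-- derivations of a localization of a finite type algebra preserve extended stable ideals -/
theorem stable_localization {k A : Type*} [Field k] [CommRing A] [IsDomain A] [Algebra k A]
    [Algebra.FiniteType k A] (f : A) (hf : f ≠ 0) (I : Ideal A)
    (hI : ∀ D : Derivation k A A, ∀ a ∈ I, D a ∈ I)
    (D : Derivation k (Localization.Away f) (Localization.Away f))
    (x : Localization.Away f) (hx : x ∈ I.map (algebraMap A (Localization.Away f))) :
    D x ∈ I.map (algebraMap A (Localization.Away f)) := by
  let T := Localization.Away f
  have hinj : Function.Injective (algebraMap A T) :=
    IsLocalization.injective T (powers_le_nonZeroDivisors_of_noZeroDivisors hf)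
  obtain ⟨G, hG⟩ := (inferInstance : Algebra.FiniteType k A).out
  obtain ⟨b, hb⟩ := IsLocalization.exist_integer_multiples (Submonoid.powers f) G
    (fun a => D (algebraMap A T a))
  have hall : ∀ a : A, ∃ c : A, algebraMap A T c = algebraMap A T b * D (algebraMap A T a) := by
    intro a
    have ha : a ∈ Algebra.adjoin k (G : Set A) := hG ▸ Algebra.mem_top
    induction ha using Algebra.adjoin_induction with
    | mem a ha =>
      obtain ⟨c, hc⟩ := hb a ha
      exact ⟨c, by rw [hc, Algebra.smul_def]⟩
    | algebraMap r =>
      refine ⟨0, ?_⟩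
      rw [← IsScalarTower.algebraMap_apply, Derivation.map_algebraMap]; simp
    | add x y _ _ hx hy =>
      obtain ⟨c, hc⟩ := hx
      obtain ⟨d, hd⟩ := hy
      exact ⟨c + d, by rw [map_add, map_add, map_add, hc, hd, mul_add]⟩
    | mul x y _ _ hx hy =>
      obtain ⟨c, hc⟩ := hx
      obtain ⟨d, hd⟩ := hy
      refine ⟨x * d + y * c, ?_⟩
      rw [map_add, map_mul, map_mul, map_mul, hc, hd, Derivation.leibniz, smul_eq_mul, smul_eq_mul]
      ring
  choose e he using hall
  let E : Derivation k A A := Derivation.mk'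
    { toFun := e
      map_add' := fun x y => hinj (by rw [he, map_add, map_add, map_add, he, he, mul_add])
      map_smul' := fun r x => hinj (by
        rw [he, RingHom.id_apply, Algebra.smul_def, Algebra.smul_def, map_mul (algebraMap A T),
          map_mul (algebraMap A T), he, ← IsScalarTower.algebraMap_apply, Derivation.leibniz,
          Derivation.map_algebraMap, smul_zero, add_zero, smul_eq_mul]
        ring) }
    (fun x y => hinj (by
      change algebraMap A T (e (x * y)) = algebraMap A T (x * e y + y * e x)
      rw [map_add, map_mul, map_mul, he, he, he, map_mul, Derivation.leibniz, smul_eq_mul,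
        smul_eq_mul]
      ring))
  have hunit : ∀ s : Submonoid.powers f, IsUnit (algebraMap A T s) :=
    fun s => IsLocalization.map_units T s
  have key : ∀ a ∈ I, D (algebraMap A T a) ∈ I.map (algebraMap A T) := by
    intro a ha
    have h1 : algebraMap A T (E a) ∈ I.map (algebraMap A T) := Ideal.mem_map_of_mem _ (hI E a ha)
    have h2 : algebraMap A T (E a) = algebraMap A T b * D (algebraMap A T a) := he a
    rw [h2] at h1
    exact (Ideal.unit_mul_mem_iff_mem _ (hunit b)).1 h1
  obtain ⟨⟨a, s⟩, has⟩ := (IsLocalization.mem_map_algebraMap_iff (Submonoid.powers f) T).1 hx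
  have h3 := key a a.2
  rw [← has, Derivation.leibniz, smul_eq_mul, smul_eq_mul] at h3
  have h4 := (Submodule.add_mem_iff_right _ (Ideal.mul_mem_right _ _ hx)).1 h3
  exact (Ideal.unit_mul_mem_iff_mem _ (hunit s)).1 h4

theorem dsimp_of_smooth {k A : Type*} [Field k] [CharZero k] [CommRing A] [IsDomain A]
    [Algebra k A] [Algebra.Smooth k A] : DSimp k A := by
  intro I hI
  by_contra! hc
  obtain ⟨h0, h1⟩ := hc
  obtain ⟨m, hm, hIm⟩ := Ideal.exists_le_maximal I h1
  obtain ⟨f, hfm, n, _, _, _⟩ :=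
    Algebra.IsSmoothAt.exists_isStandardEtale_mvPolynomial (R := k) (S := A) (p := m)
  have hf : f ≠ 0 := fun h => hfm (h ▸ m.zero_mem)
  let T := Localization.Away f
  let P := MvPolynomial (Fin n) k
  have hle := powers_le_nonZeroDivisors_of_noZeroDivisors hf
  have : IsDomain T := IsLocalization.isDomain_localization hle
  have hinj : Function.Injective (algebraMap A T) := IsLocalization.injective T hle
  have : Algebra.Etale P T := inferInstance
  have := isAlgebraic_of_etale P T
  obtain ⟨x, hx, hx0⟩ := (Submodule.ne_bot_iff _).1 h0
  let J : Ideal P := (I.map (algebraMap A T)).comap (algebraMap P T)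
  have hJ0 : J ≠ ⊥ := Ideal.comap_ne_bot_of_algebraic_mem (x := algebraMap A T x)
    (by simpa using (map_ne_zero_iff _ hinj).2 hx0) (Ideal.mem_map_of_mem _ hx)
    (Algebra.IsAlgebraic.isAlgebraic _)
  have hJ : J = ⊤ := by
    refine ideal_eq_top_of_pderiv J hJ0 fun i p hp => ?_
    obtain ⟨D, hD⟩ := exists_derivation_extend k P T (pderiv i)
    change algebraMap P T (pderiv i p) ∈ I.map (algebraMap A T)
    rw [← hD]
    exact stable_localization f hf I hI D _ hp
  have h2 : I.map (algebraMap A T) = ⊤ := by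
    rw [Ideal.eq_top_iff_one] at hJ ⊢
    have : algebraMap P T 1 ∈ I.map (algebraMap A T) := hJ
    simpa using this
  have h3 : algebraMap A T 1 ∈ I.map (algebraMap A T) := by rw [h2]; trivial
  rw [IsLocalization.algebraMap_mem_map_algebraMap_iff (Submonoid.powers f)] at h3
  obtain ⟨_, ⟨j, rfl⟩, hj⟩ := h3
  rw [mul_one] at hj
  exact hfm (hm.isPrime.mem_of_pow_mem j (hIm hj))
end four

/-- The Lie algebra of polynomial vector fields on an irreducible affine variety of
positive dimension is simple if and only if the variety is smooth. -/
theorem derivations_simple_iff_smooth.{u}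
    (k : Type u) [Field k] [IsAlgClosed k] [CharZero k]
    (A : Type u) [CommRing A] [IsDomain A] [Algebra k A] [Algebra.FiniteType k A]
    (hA : ¬ IsField A) :
    LieAlgebra.IsSimple k (Derivation k A A) ↔ Algebra.Smooth k A := by
  have : IsNoetherianRing A := Algebra.FiniteType.isNoetherianRing k A
  constructor
  · intro h
    have h1 := smooth_of_dsimp (dsimp_of_isSimple h)
    exact ⟨h1, Algebra.FinitePresentation.of_finiteType.1 inferInstance⟩
  · intro h
    exact isSimple_of_dsimp dsimp_of_smooth hA
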